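/- Let d ≥ 1 and let φ : ℕ → (0,∞) be a positive increasing function with ∑_{n=1}^∞ 1/φ(n) < ∞. For Lebesgue-almost every α = (α₁,…,α_d) ∈ [0,1]^d there is a constant C(α,φ) such that for every integer p ≥ 1 and every integer v ≥ 1, the cardinality of S_α(p,v) is at most C(α,φ)·2^v·φ(v). -/

import Mathlib

open MeasureTheory Finset

noncomputable section

/-- Distance from `y` to the nearest integer. -/
def nid (y : ℝ) : ℝ := |y - round y|

open scoped ENNReal

theorem nid_nonneg (y : ℝ) : 0 ≤ nid y := abs_nonneg _

theorem measurable_nid : Measurable nid := by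
  have h : nid = fun y : ℝ => ‖(y : UnitAddCircle)‖ := by
    ext y
    rw [UnitAddCircle.norm_eq]; rfl
  rw [h]
  exact (continuous_norm.comp (AddCircle.continuous_mk' 1)).measurable

/-- Multiplication by `n` preserves the measure of the circle, so `nid (n * x)` is distributed
as `|x|` on a symmetric unit interval. -/
theorem lintegral_nid_mul {n : ℕ} (hn : 1 ≤ n) {g : ℝ → ℝ≥0∞} (hg : Measurable g) :
    ∫⁻ x in Set.Icc (0 : ℝ) 1, g (nid (n * x)) =
      ∫⁻ x in Set.Ioc (-(1 / 2) : ℝ) (1 / 2), g |x| := by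
  have hcirc : Measurable fun x : UnitAddCircle => g ‖x‖ := hg.comp measurable_norm
  have hpres : MeasurePreserving (fun x : UnitAddCircle => (n : ℤ) • x) :=
    Measure.measurePreserving_zsmul volume (by exact_mod_cast (by omega : n ≠ 0))
  calc ∫⁻ x in Set.Icc (0 : ℝ) 1, g (nid (n * x))
      = ∫⁻ x in Set.Ioc (0 : ℝ) (0 + 1), g ‖(n : ℤ) • (x : UnitAddCircle)‖ := by
        rw [zero_add, restrict_Ioc_eq_restrict_Icc]
        refine lintegral_congr fun x => ?_
        rw [← AddCircle.coe_zsmul, UnitAddCircle.norm_eq]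
        simp [nid]
    _ = ∫⁻ x : UnitAddCircle, g ‖(n : ℤ) • x‖ :=
        UnitAddCircle.lintegral_preimage 0 fun x => g ‖(n : ℤ) • x‖
    _ = ∫⁻ x : UnitAddCircle, g ‖x‖ := hpres.lintegral_comp hcirc
    _ = ∫⁻ x in Set.Ioc (-(1 / 2) : ℝ) (-(1 / 2) + 1), g ‖(x : UnitAddCircle)‖ :=
        (UnitAddCircle.lintegral_preimage _ fun x => g ‖x‖).symm
    _ = ∫⁻ x in Set.Ioc (-(1 / 2) : ℝ) (1 / 2), g |x| := by
        norm_num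
        refine setLIntegral_congr_fun measurableSet_Ioc fun x hx => ?_
        have hnorm : ‖(x : UnitAddCircle)‖ = |x| := by
          rw [AddCircle.norm_coe_eq_abs_iff 1 one_ne_zero, abs_one, abs_le]
          exact ⟨hx.1.le, hx.2⟩
        simp only [hnorm]

theorem volume_nid_mul_lt_le {n : ℕ} (hn : 1 ≤ n) {s : ℝ} (hs0 : 0 ≤ s) (hs1 : s ≤ 1)
    (t : ℝ) :
    volume.restrict (Set.Icc (0 : ℝ) 1) {x : ℝ | nid (n * x) < t} ≤
      ENNReal.ofReal (2 * t) ^ s := by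
  rcases le_total 1 (2 * t) with h | h
  · calc volume.restrict (Set.Icc (0 : ℝ) 1) {x : ℝ | nid (n * x) < t}
        ≤ volume.restrict (Set.Icc (0 : ℝ) 1) Set.univ := measure_mono (Set.subset_univ _)
      _ = 1 ^ s := by simp
      _ ≤ ENNReal.ofReal (2 * t) ^ s := by
        gcongr
        exact ENNReal.one_le_ofReal.2 h
  have hmeas : MeasurableSet {x : ℝ | nid (n * x) < t} :=
    measurableSet_lt (measurable_nid.comp (measurable_const_mul _)) measurable_const
  calc volume.restrict (Set.Icc (0 : ℝ) 1) {x : ℝ | nid (n * x) < t}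
      = ∫⁻ x in Set.Icc (0 : ℝ) 1, (Set.Iio t).indicator 1 (nid (n * x)) := by
        rw [← lintegral_indicator_one hmeas]
        rfl
    _ = ∫⁻ x in Set.Ioc (-(1 / 2) : ℝ) (1 / 2), (Set.Iio t).indicator 1 |x| :=
        lintegral_nid_mul hn (measurable_one.indicator measurableSet_Iio)
    _ ≤ ∫⁻ x : ℝ, (Set.Iio t).indicator 1 |x| := setLIntegral_le_lintegral _ _
    _ = ∫⁻ x : ℝ, (Set.Ioo (-t) t).indicator 1 x := by
        refine lintegral_congr fun x => ?_
        simp only [Set.indicator, Set.mem_Iio, Set.mem_Ioo, abs_lt, Pi.one_apply]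
    _ = ENNReal.ofReal (2 * t) := by
        rw [lintegral_indicator_one measurableSet_Ioo, Real.volume_Ioo]
        ring_nf
    _ = ENNReal.ofReal (2 * t) ^ (1 : ℝ) := (ENNReal.rpow_one _).symm
    _ ≤ ENNReal.ofReal (2 * t) ^ s :=
        ENNReal.rpow_le_rpow_of_exponent_ge (ENNReal.ofReal_le_one.2 h) hs1

theorem lintegral_Ioc_comp_abs {a : ℝ} (ha : 0 ≤ a) (g : ℝ → ℝ≥0∞) :
    ∫⁻ x in Set.Ioc (-a) a, g |x| = 2 * ∫⁻ x in Set.Ioc 0 a, g x := by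
  have hpos : ∫⁻ x in Set.Ioc 0 a, g |x| = ∫⁻ x in Set.Ioc 0 a, g x :=
    setLIntegral_congr_fun measurableSet_Ioc fun x hx => by simp only [abs_of_pos hx.1]
  have hneg : ∫⁻ x in Set.Ioc (-a) 0, g |x| = ∫⁻ x in Set.Ioc 0 a, g |x| := by
    have h := (Measure.measurePreserving_neg (volume : Measure ℝ)).setLIntegral_comp_preimage_emb
      (MeasurableEquiv.neg ℝ).measurableEmbedding (fun x => g |x|) (Set.Ioc 0 a)
    simp only [Set.neg_preimage, Set.neg_Ioc, abs_neg, neg_zero] at h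
    rw [restrict_Ico_eq_restrict_Ioc] at h
    exact h
  rw [← Set.Ioc_union_Ioc_eq_Ioc (neg_nonpos.2 ha) ha,
    lintegral_union measurableSet_Ioc (Set.Ioc_disjoint_Ioc_of_le le_rfl), hneg, hpos, two_mul]

theorem lintegral_nid_mul_rpow_le {n : ℕ} (hn : 1 ≤ n) {s : ℝ} (hs1 : s < 1) :
    ∫⁻ x in Set.Icc (0 : ℝ) 1, ENNReal.ofReal (nid (n * x)) ^ (-s) ≤
      ENNReal.ofReal (2 / (1 - s)) := by
  have hs : 0 < 1 - s := sub_pos.2 hs1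
  rw [lintegral_nid_mul hn (g := fun y => ENNReal.ofReal y ^ (-s)) (by fun_prop),
    lintegral_Ioc_comp_abs (by norm_num) fun y => ENNReal.ofReal y ^ (-s)]
  have hint : ∫⁻ x in Set.Ioc (0 : ℝ) (1 / 2), ENNReal.ofReal x ^ (-s) =
      ENNReal.ofReal ((1 / 2) ^ (1 - s) / (1 - s)) := by
    have hcalc : ∫ x in (0 : ℝ)..(1 / 2), x ^ (-s) = (1 / 2) ^ (1 - s) / (1 - s) := by
      rw [integral_rpow (Or.inl (by linarith)), neg_add_eq_sub, Real.zero_rpow hs.ne', sub_zero]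
    rw [← hcalc, intervalIntegral.integral_of_le (by norm_num),
      ofReal_integral_eq_lintegral_ofReal]
    · exact setLIntegral_congr_fun measurableSet_Ioc fun x hx => ENNReal.ofReal_rpow_of_pos hx.1
    · exact (intervalIntegrable_iff_integrableOn_Ioc_of_le (by norm_num)).1
        (intervalIntegral.intervalIntegrable_rpow' (by linarith))
    · exact (ae_restrict_iff' measurableSet_Ioc).2
        (.of_forall fun x hx => Real.rpow_nonneg hx.1.le _)
  rw [hint, ← ENNReal.ofReal_ofNat 2, ← ENNReal.ofReal_mul zero_le_two, ← mul_div_assoc]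
  refine ENNReal.ofReal_le_ofReal (div_le_div_of_nonneg_right ?_ hs.le)
  have := Real.rpow_le_one (by norm_num : (0 : ℝ) ≤ 1 / 2) (by norm_num) hs.le
  linarith

/-- Lebesgue measure on the unit cube. -/
def cubeMeasure (k : ℕ) : Measure (Fin k → ℝ) :=
  Measure.pi fun _ => volume.restrict (Set.Icc (0 : ℝ) 1)

theorem measurable_prod_nid (k n : ℕ) :
    Measurable fun α : Fin k → ℝ => ∏ i, nid (n * α i) :=
  Finset.measurable_fun_prod _ fun i _ =>
    measurable_nid.comp ((measurable_pi_apply i).const_mul _)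

theorem cubeMeasure_prod_nid_lt_le_rpow {n : ℕ} (hn : 1 ≤ n) {s : ℝ} (hs0 : 0 < s) (hs1 : s < 1)
    (k : ℕ) {t : ℝ} (ht : 0 < t) :
    cubeMeasure (k + 1) {α | ∏ i, nid (n * α i) < t} ≤
      ENNReal.ofReal (2 * t) ^ s * ENNReal.ofReal (2 / (1 - s)) ^ k := by
  have hs : 0 < 1 - s := sub_pos.2 hs1
  induction k generalizing t with
  | zero =>
    have hpres := measurePreserving_piUnique
      (fun _ : Fin 1 => volume.restrict (Set.Icc (0 : ℝ) 1))
    have h := hpres.measure_preimage_equiv {x : ℝ | nid (n * x) < t}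
    rw [pow_zero, mul_one]
    refine le_trans (le_of_eq ?_) (volume_nid_mul_lt_le hn hs0.le hs1.le t)
    rw [← h]
    simp [cubeMeasure, MeasurableEquiv.piUnique_apply, Fin.default_eq_zero]
  | succ k ih =>
    have hpres := measurePreserving_piFinSuccAbove
      (fun _ : Fin (k + 2) => volume.restrict (Set.Icc (0 : ℝ) 1)) 0
    set E : Set (ℝ × (Fin (k + 1) → ℝ)) := {z | nid (n * z.1) * ∏ i, nid (n * z.2 i) < t} with hE
    have hEmeas : MeasurableSet E :=
      measurableSet_lt ((measurable_nid.comp (measurable_fst.const_mul _)).mul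
        ((measurable_prod_nid (k + 1) n).comp measurable_snd)) measurable_const
    have hpre : cubeMeasure (k + 2) {α | ∏ i, nid (n * α i) < t} =
        ((volume.restrict (Set.Icc (0 : ℝ) 1)).prod (cubeMeasure (k + 1))) E := by
      rw [cubeMeasure, cubeMeasure, ← hpres.measure_preimage_equiv E]
      congr 1
      ext α
      simp [hE, Fin.prod_univ_succ (n := k + 1), Fin.tail]
    have : SFinite (cubeMeasure (k + 1)) := by unfold cubeMeasure; infer_instance
    rw [hpre, Measure.prod_apply hEmeas]
    calc ∫⁻ x in Set.Icc (0 : ℝ) 1, cubeMeasure (k + 1) (Prod.mk x ⁻¹' E)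
        ≤ ∫⁻ x in Set.Icc (0 : ℝ) 1, (ENNReal.ofReal (2 * t) ^ s *
            ENNReal.ofReal (2 / (1 - s)) ^ k) * ENNReal.ofReal (nid (n * x)) ^ (-s) := by
          refine lintegral_mono fun x => ?_
          rcases (nid_nonneg (n * x)).eq_or_lt with h0 | h0
          · rw [← h0, ENNReal.ofReal_zero, ENNReal.zero_rpow_of_neg (neg_lt_zero.2 hs0),
              ENNReal.mul_top]
            · exact le_top
            · have h1 : 0 < ENNReal.ofReal (2 * t) := ENNReal.ofReal_pos.2 (by positivity)
              have h2 : 0 < ENNReal.ofReal (2 / (1 - s)) := ENNReal.ofReal_pos.2 (by positivity)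
              exact mul_ne_zero (ENNReal.rpow_pos h1 ENNReal.ofReal_ne_top).ne'
                (pow_ne_zero _ h2.ne')
          · have hset : Prod.mk x ⁻¹' E = {y | ∏ i, nid (n * y i) < t / nid (n * x)} := by
              ext y
              simp only [hE, Set.mem_preimage, Set.mem_ofPred_eq, lt_div_iff₀' h0]
            rw [hset]
            refine (ih (div_pos ht h0)).trans (le_of_eq ?_)
            rw [← mul_div_assoc, ENNReal.ofReal_div_of_pos h0,
              ENNReal.div_rpow_of_nonneg _ _ hs0.le, ENNReal.rpow_neg, div_eq_mul_inv]
            ring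
      _ ≤ (ENNReal.ofReal (2 * t) ^ s * ENNReal.ofReal (2 / (1 - s)) ^ k) *
            ENNReal.ofReal (2 / (1 - s)) := by
          rw [lintegral_const_mul]
          · gcongr
            exact lintegral_nid_mul_rpow_le hn hs1
          · exact ((measurable_nid.comp (measurable_const_mul _)).ennreal_ofReal).pow_const _
      _ = _ := by rw [pow_succ, mul_assoc]

/-- The sublevel sets of `∏ ‖n α_i‖` have measure `O(t (log (1 / t)) ^ (d - 1))`. -/
theorem cubeMeasure_prod_nid_lt_le {n : ℕ} (hn : 1 ≤ n) (k : ℕ) {t L : ℝ} (ht : 0 < t)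
    (hL : 1 < L) (htL : -Real.log t ≤ L) :
    cubeMeasure (k + 1) {α | ∏ i, nid (n * α i) < t} ≤
      ENNReal.ofReal (2 * Real.exp 1 * t * (2 * L) ^ k) := by
  have hL0 : 0 < L := by linarith
  have hs1 : 1 - L⁻¹ < 1 := sub_lt_self _ (inv_pos.2 hL0)
  have hs0 : 0 < 1 - L⁻¹ := sub_pos.2 (inv_lt_one_of_one_lt₀ hL)
  refine (cubeMeasure_prod_nid_lt_le_rpow hn hs0 hs1 k ht).trans ?_
  rw [sub_sub_cancel, div_inv_eq_mul, ENNReal.ofReal_rpow_of_pos (by positivity),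
    ← ENNReal.ofReal_pow (by positivity), ← ENNReal.ofReal_mul (by positivity)]
  refine ENNReal.ofReal_le_ofReal ?_
  gcongr
  rw [Real.mul_rpow zero_le_two ht.le, mul_assoc]
  gcongr
  · exact Real.rpow_le_self_of_one_le one_le_two hs1.le
  · rw [Real.rpow_def_of_pos ht]
    nth_rewrite 2 [← Real.exp_log ht]
    rw [← Real.exp_add, Real.exp_le_exp]
    have h : -Real.log t * L⁻¹ ≤ 1 := by
      rw [← div_eq_mul_inv, div_le_one hL0]
      exact htL
    linarith

/-- The expected number of `n` in the block `log log n < q + 1` with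
`n * ∏ ‖n α_i‖ < 2 ^ v / (exp q ^ d * w)`. -/
theorem sum_cubeMeasure_prod_nid_lt_le (k q v : ℕ) {w : ℝ} (hw : 0 < w) (hwq : w ≤ Real.exp q) :
    ∑ n ∈ Icc 1 ⌊Real.exp (Real.exp (q + 1))⌋₊, cubeMeasure (k + 1)
        {α | ∏ i, nid (n * α i) < 2 ^ v / (n * (Real.exp q ^ (k + 1) * w))} ≤
      ENNReal.ofReal (8 * Real.exp 1 * (2 * (k + 5)) ^ k * 2 ^ v / w) := by
  set E := Real.exp q with hE
  have hE1 : 1 ≤ E := Real.one_le_exp (Nat.cast_nonneg q)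
  have hE0 : 0 < E := by linarith
  have hqE : (q : ℝ) ≤ E := by linarith [Real.add_one_le_exp (q : ℝ)]
  have hsucc : Real.exp (q + 1) ≤ 3 * E := by
    rw [Real.exp_add, mul_comm]
    gcongr
    linarith [Real.exp_one_lt_d9]
  have hlog : ∀ n ∈ Icc 1 ⌊Real.exp (Real.exp (q + 1))⌋₊, Real.log n ≤ 3 * E := by
    intro n hn
    rw [mem_Icc, Nat.le_floor_iff (Real.exp_pos _).le] at hn
    have hn0 : (0 : ℝ) < n := by exact_mod_cast hn.1
    exact ((Real.log_le_iff_le_exp hn0).2 hn.2).trans hsucc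
  set A : ℝ := 2 * Real.exp 1 * (2 * (k + 5)) ^ k * 2 ^ v / (w * E) with hA
  have hbound : ∀ n ∈ Icc 1 ⌊Real.exp (Real.exp (q + 1))⌋₊, cubeMeasure (k + 1)
      {α | ∏ i, nid (n * α i) < 2 ^ v / (n * (E ^ (k + 1) * w))} ≤
        ENNReal.ofReal (A * (n : ℝ)⁻¹) := by
    intro n hn
    have hn1 : 1 ≤ n := (mem_Icc.1 hn).1
    have hn0 : (0 : ℝ) < n := by exact_mod_cast hn1
    refine (cubeMeasure_prod_nid_lt_le hn1 k (L := (k + 5) * E) (by positivity) ?_ ?_).trans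
      (le_of_eq ?_)
    · have : (0 : ℝ) ≤ k := k.cast_nonneg
      nlinarith
    · rw [Real.log_div (by positivity) (by positivity), Real.log_mul hn0.ne' (by positivity),
        Real.log_mul (by positivity) hw.ne', Real.log_pow, Real.log_pow, hE, Real.log_exp, ← hE]
      have h2 : 0 ≤ (v : ℝ) * Real.log 2 := by positivity
      have hlw : Real.log w ≤ q := (Real.log_le_iff_le_exp hw).2 hwq
      have hkq : ((k + 1 : ℕ) : ℝ) * q ≤ (k + 1 : ℕ) * E := by gcongr
      push_cast at hkq ⊢
      linarith [hlog n hn]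
    · congr 1
      rw [hA, ← mul_assoc 2 _ E, mul_pow _ E]
      field_simp
      rw [pow_succ]
  have hharm : ∑ n ∈ Icc 1 ⌊Real.exp (Real.exp (q + 1))⌋₊, (n : ℝ)⁻¹ ≤ 4 * E := by
    have h := harmonic_le_one_add_log ⌊Real.exp (Real.exp (q + 1))⌋₊
    rw [harmonic_eq_sum_Icc] at h
    push_cast at h
    have hpos : 1 ≤ ⌊Real.exp (Real.exp (q + 1))⌋₊ :=
      Nat.one_le_floor_iff _ |>.2 (Real.one_le_exp (Real.exp_pos _).le)
    linarith [hlog _ (mem_Icc.2 ⟨hpos, le_rfl⟩)]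
  calc _ ≤ ∑ n ∈ Icc 1 ⌊Real.exp (Real.exp (q + 1))⌋₊, ENNReal.ofReal (A * (n : ℝ)⁻¹) :=
        sum_le_sum hbound
    _ = ENNReal.ofReal (A * ∑ n ∈ Icc 1 ⌊Real.exp (Real.exp (q + 1))⌋₊, (n : ℝ)⁻¹) := by
        rw [mul_sum, ENNReal.ofReal_sum_of_nonneg fun n _ => by positivity]
    _ ≤ ENNReal.ofReal (A * (4 * E)) := by gcongr
    _ = _ := by
        congr 1
        rw [hA]
        field_simp
        ring

/-- The `n` in the block `log log n < q + 1` with `n * ∏ ‖n α_i‖ < 2 ^ v / (exp q ^ d * w)`. -/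
def smallProducts (d q v : ℕ) (w : ℝ) (α : Fin d → ℝ) : Finset ℕ :=
  {n ∈ Icc 1 ⌊Real.exp (Real.exp (q + 1))⌋₊ |
    ∏ i, nid (n * α i) < 2 ^ v / (n * (Real.exp q ^ d * w))}

theorem measurableSet_prod_nid_lt (d n : ℕ) (t : ℝ) :
    MeasurableSet {α : Fin d → ℝ | ∏ i, nid (n * α i) < t} :=
  measurableSet_lt (measurable_prod_nid d n) measurable_const

theorem card_smallProducts_eq (d q v : ℕ) (w : ℝ) :
    (fun α => ((#(smallProducts d q v w α) : ℕ) : ℝ≥0∞)) = fun α =>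
      ∑ n ∈ Icc 1 ⌊Real.exp (Real.exp (q + 1))⌋₊,
        {α : Fin d → ℝ | ∏ i, nid (n * α i) < 2 ^ v / (n * (Real.exp q ^ d * w))}.indicator
          (1 : (Fin d → ℝ) → ℝ≥0∞) α := by
  ext α
  simp [smallProducts, Set.indicator]

theorem measurable_card_smallProducts (d q v : ℕ) (w : ℝ) :
    Measurable fun α => ((#(smallProducts d q v w α) : ℕ) : ℝ≥0∞) := by
  rw [card_smallProducts_eq]
  exact Finset.measurable_fun_sum _ fun n _ =>
    measurable_one.indicator (measurableSet_prod_nid_lt d n _)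

theorem lintegral_card_smallProducts_le (k q v : ℕ) {w : ℝ} (hw : 0 < w)
    (hwq : w ≤ Real.exp q) :
    ∫⁻ α, (#(smallProducts (k + 1) q v w α) : ℝ≥0∞) ∂cubeMeasure (k + 1) ≤
      ENNReal.ofReal (8 * Real.exp 1 * (2 * (k + 5)) ^ k * 2 ^ v / w) := by
  rw [card_smallProducts_eq, lintegral_finsetSum _ fun n _ =>
    measurable_one.indicator (measurableSet_prod_nid_lt _ n _)]
  simp_rw [lintegral_indicator_one (measurableSet_prod_nid_lt _ _ _)]
  exact sum_cubeMeasure_prod_nid_lt_le k q v hw hwq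

theorem summable_one_div_min_exp {φ : ℕ → ℝ} (hφpos : ∀ n, 0 < φ n)
    (hφsum : Summable fun n => 1 / φ n) :
    Summable fun q : ℕ => 1 / min (φ q) (Real.exp q) := by
  refine Summable.of_nonneg_of_le (fun q => ?_) (fun q => ?_)
    (hφsum.add Real.summable_exp_neg_nat)
  · have := lt_min (hφpos q) (Real.exp_pos q)
    positivity
  · have h1 : 0 < 1 / φ q := one_div_pos.2 (hφpos q)
    have h2 := Real.exp_pos (-(q : ℝ))
    rcases min_choice (φ q) (Real.exp q) with h | h <;> rw [h]
    · linarith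
    · rw [one_div, ← Real.exp_neg]
      linarith

theorem ae_card_smallProducts_le (k : ℕ) {φ : ℕ → ℝ} (hφpos : ∀ n, 0 < φ n)
    (hφsum : Summable fun n => 1 / φ n) :
    ∀ᵐ α ∂cubeMeasure (k + 1), ∃ C : ℝ, ∀ q v : ℕ,
      (#(smallProducts (k + 1) q v (min (φ q) (Real.exp q)) α) : ℝ) ≤ C * 2 ^ v * φ v := by
  have hw : ∀ q : ℕ, 0 < min (φ q) (Real.exp q) := fun q => lt_min (hφpos q) (Real.exp_pos _)
  set f : ℕ × ℕ → (Fin (k + 1) → ℝ) → ℝ≥0∞ := fun z α =>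
    ENNReal.ofReal (1 / (2 ^ z.2 * φ z.2)) *
      #(smallProducts (k + 1) z.1 z.2 (min (φ z.1) (Real.exp z.1)) α) with hf
  have hfmeas : ∀ z, Measurable (f z) := fun z =>
    (measurable_card_smallProducts _ _ _ _).const_mul _
  set K : ℝ := 8 * Real.exp 1 * (2 * (k + 5)) ^ k with hK
  have hint : ∫⁻ α, ∑' z, f z α ∂cubeMeasure (k + 1) ≠ ⊤ := by
    rw [lintegral_tsum fun z => (hfmeas z).aemeasurable]
    have hsum : Summable fun z : ℕ × ℕ => K * (1 / min (φ z.1) (Real.exp z.1) * (1 / φ z.2)) :=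
      ((summable_one_div_min_exp hφpos hφsum).mul_of_nonneg hφsum
        (fun q => (one_div_pos.2 (hw q)).le) fun v => (one_div_pos.2 (hφpos v)).le).mul_left K
    refine ne_top_of_le_ne_top hsum.tsum_ofReal_ne_top (ENNReal.tsum_le_tsum fun z => ?_)
    rw [lintegral_const_mul _ (measurable_card_smallProducts _ _ _ _)]
    have hφz := hφpos z.2
    have hwz := hw z.1
    calc _ ≤ ENNReal.ofReal (1 / (2 ^ z.2 * φ z.2)) *
          ENNReal.ofReal (K * 2 ^ z.2 / min (φ z.1) (Real.exp z.1)) := by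
          gcongr
          exact lintegral_card_smallProducts_le k z.1 z.2 hwz (min_le_right _ _)
      _ = _ := by
          rw [← ENNReal.ofReal_mul (by positivity)]
          congr 1
          field_simp
  filter_upwards [ae_lt_top (Measurable.tsum hfmeas) hint] with α hα
  refine ⟨(∑' z, f z α).toReal, fun q v => ?_⟩
  have hle := ENNReal.toReal_mono hα.ne (ENNReal.le_tsum (f := fun z => f z α) (q, v))
  have hφv := hφpos v
  simp only [hf, ENNReal.toReal_mul, ENNReal.toReal_natCast] at hle
  rw [ENNReal.toReal_ofReal (by positivity), one_div_mul_eq_div, div_le_iff₀ (by positivity)] at hle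
  rw [mul_assoc]
  exact hle

/-- For a.e. `α ∈ [0,1]^d` there is `C(α,φ)` such that for all `p ≥ 1`, `v ≥ 1`,
`#S_α(p,v) ≤ C·2^v·φ(v)`, where `S_α(p,v)` collects the `n` with
`e^{e^{p−1}} ≤ n < e^{e^p}` and
`2^{v−1}/((log n)^d·φ(⌈log log n⌉)) ≤ n·∏‖nα_i‖ < 2^v/((log n)^d·φ(⌈log log n⌉))`. -/
theorem stmt_13 (d : ℕ) (hd : 1 ≤ d) (φ : ℕ → ℝ) (hφpos : ∀ n, 0 < φ n)
    (hφmono : Monotone φ) (hφsum : Summable fun n => 1 / φ n) :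
    ∀ᵐ α ∂((volume : Measure (Fin d → ℝ)).restrict
        (Set.univ.pi fun _ : Fin d => Set.Icc (0 : ℝ) 1)),
      ∃ C : ℝ, ∀ p v : ℕ, 1 ≤ p → 1 ≤ v →
        (Set.ncard {n : ℕ |
            Real.exp (Real.exp ((p : ℝ) - 1)) ≤ (n : ℝ) ∧
            (n : ℝ) < Real.exp (Real.exp (p : ℝ)) ∧
            (2 : ℝ) ^ (v - 1) /
                (Real.log n ^ d * φ (Nat.ceil (Real.log (Real.log n)))) ≤
              (n : ℝ) * ∏ i : Fin d, nid ((n : ℝ) * α i) ∧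
            (n : ℝ) * ∏ i : Fin d, nid ((n : ℝ) * α i) <
              (2 : ℝ) ^ v /
                (Real.log n ^ d * φ (Nat.ceil (Real.log (Real.log n))))} : ℝ) ≤
          C * 2 ^ v * φ v := by
  obtain ⟨k, rfl⟩ : ∃ k, d = k + 1 := ⟨d - 1, by omega⟩
  have hcube : (volume : Measure (Fin (k + 1) → ℝ)).restrict
      (Set.univ.pi fun _ => Set.Icc (0 : ℝ) 1) = cubeMeasure (k + 1) :=
    Measure.restrict_pi_pi (fun _ : Fin (k + 1) => (volume : Measure ℝ)) _
  rw [hcube]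
  filter_upwards [ae_card_smallProducts_le k hφpos hφsum] with α hα
  obtain ⟨C, hC⟩ := hα
  refine ⟨C, fun p v hp _ => le_trans ?_ (hC (p - 1) v)⟩
  obtain ⟨q, rfl⟩ : ∃ q, p = q + 1 := ⟨p - 1, by omega⟩
  rw [Nat.add_sub_cancel, Nat.cast_le, ← Set.ncard_coe_finset]
  refine Set.ncard_le_ncard ?_ (Finset.finite_toSet _)
  rintro n ⟨hlo, hhi, -, hlt⟩
  push_cast at hlo hhi
  rw [add_sub_cancel_right] at hlo
  have hn0 : (0 : ℝ) < n := (Real.exp_pos _).trans_le hlo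
  have hlog : Real.exp q ≤ Real.log n := (Real.le_log_iff_exp_le hn0).2 hlo
  have hloglog : (q : ℝ) ≤ Real.log (Real.log n) :=
    (Real.le_log_iff_exp_le ((Real.exp_pos _).trans_le hlog)).2 hlog
  have hφle : φ q ≤ φ ⌈Real.log (Real.log n)⌉₊ :=
    hφmono (by exact_mod_cast hloglog.trans (Nat.le_ceil _))
  have hw : 0 < min (φ q) (Real.exp q) := lt_min (hφpos q) (Real.exp_pos _)
  simp only [smallProducts, coe_filter, Set.mem_ofPred_eq, mem_Icc]
  refine ⟨⟨by exact_mod_cast hn0, Nat.le_floor hhi.le⟩, ?_⟩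
  rw [← div_div, div_right_comm, lt_div_iff₀' hn0]
  refine hlt.trans_le ?_
  gcongr
  exact (min_le_left _ _).trans hφle
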